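/- arXiv:2009.11578 — 4 statements merged into one kernel-verified Lean document; each statement's English description precedes it below -/
import Mathlib

section
/- The A-submodule O = A·1 + A·(c·ω₁ + b·ω₂) + A·(a·ω₂) of K is closed under multiplication (equivalently, is a subring of K) if and only if every entry of the matrix M₁·M₂·H⁻¹ lies in A, where H is the matrix with rows (1,0,0), (0,c,b), (0,0,a) and M₁ is the matrix with rows (c², b², 2bc), (0, a², 0), (0, ab, ac). -/
/-!
Put `η = cω₁ + bω₂` and `ζ = aω₂`, so that `(1, η, ζ)ᵗ = H (1, ω₁, ω₂)ᵗ`. The rows of `M₁` expand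
`η², ζ², ηζ` in terms of `ω₁², ω₂², ω₁ω₂`, hence `(η², ζ², ηζ)ᵗ = M₁ M₂ (1, ω₁, ω₂)ᵗ`, which equals
`N (1, η, ζ)ᵗ` for `N = M₁ M₂ H⁻¹`, since `det H = ca ≠ 0`. Thus `N` holds the coordinates of
`η², ζ², ηζ` in the `k`-basis `(1, η, ζ)`. If these are polynomials, then multiplying out shows
that the `A`-span of `1, η, ζ` is closed under products; conversely, closure puts `η², ζ², ηζ` in the
span, and uniqueness of coordinates makes every entry of `N` a polynomial (`ordSpan_mul_iff`).
-/

open Polynomial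

/-- The canonical embedding of `A = 𝔽_q[T]` into `k = 𝔽_q(T)`. -/
noncomputable def toRat {Fq : Type*} [Field Fq] (p : Polynomial Fq) : RatFunc Fq :=
  algebraMap (Polynomial Fq) (RatFunc Fq) p

/-- The `A`-submodule `A·x + A·y + A·z` of `K`, as a set. -/
noncomputable def ordSpan (Fq : Type*) [Field Fq] {K : Type*} [Field K]
    [Algebra (RatFunc Fq) K] (x y z : K) : Set K :=
  { t | ∃ u v w : Polynomial Fq,
      t = algebraMap (RatFunc Fq) K (toRat u) * x +
          algebraMap (RatFunc Fq) K (toRat v) * y +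
          algebraMap (RatFunc Fq) K (toRat w) * z }

lemma toRat_add {F : Type*} [Field F] (p q : Polynomial F) :
    toRat (p + q) = toRat p + toRat q := map_add _ _ _

lemma toRat_mul {F : Type*} [Field F] (p q : Polynomial F) :
    toRat (p * q) = toRat p * toRat q := map_mul _ _ _

lemma toRat_zero {F : Type*} [Field F] : toRat (0 : Polynomial F) = 0 := map_zero _

lemma toRat_one {F : Type*} [Field F] : toRat (1 : Polynomial F) = 1 := map_one _

lemma toRat_ne_zero {F : Type*} [Field F] {p : Polynomial F} (hp : p ≠ 0) : toRat p ≠ 0 :=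
  RatFunc.algebraMap_ne_zero hp

lemma coords_eq_zero {k K : Type*} [Field k] [Field K] [Algebra k K] {x y : K}
    (h : LinearIndependent k ![(1 : K), x, y]) (p q r : k)
    (h0 : algebraMap k K p + algebraMap k K q * x + algebraMap k K r * y = 0) :
    p = 0 ∧ q = 0 ∧ r = 0 := by
  have key := Fintype.linearIndependent_iff.1 h ![p, q, r] (by
    simpa [Fin.sum_univ_three, Algebra.smul_def] using h0)
  exact ⟨key 0, key 1, key 2⟩

/-- If `N` expresses `η², ζ², ηζ` in terms of `1, η, ζ`, and coordinates with respect to `1, η, ζ`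
are unique, then the `A`-span of `1, η, ζ` is closed under products exactly when `N` has
entries in `A`. -/
lemma ordSpan_mul_iff {F : Type*} [Field F] {K : Type*} [Field K] [Algebra (RatFunc F) K]
    (η ζ : K)
    (hind : ∀ p q r : RatFunc F, algebraMap (RatFunc F) K p + algebraMap (RatFunc F) K q * η +
      algebraMap (RatFunc F) K r * ζ = 0 → p = 0 ∧ q = 0 ∧ r = 0)
    (N : Matrix (Fin 3) (Fin 3) (RatFunc F))
    (h0 : η * η = algebraMap (RatFunc F) K (N 0 0) + algebraMap (RatFunc F) K (N 0 1) * η +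
      algebraMap (RatFunc F) K (N 0 2) * ζ)
    (h1 : ζ * ζ = algebraMap (RatFunc F) K (N 1 0) + algebraMap (RatFunc F) K (N 1 1) * η +
      algebraMap (RatFunc F) K (N 1 2) * ζ)
    (h2 : η * ζ = algebraMap (RatFunc F) K (N 2 0) + algebraMap (RatFunc F) K (N 2 1) * η +
      algebraMap (RatFunc F) K (N 2 2) * ζ) :
    (∀ x ∈ ordSpan F 1 η ζ, ∀ y ∈ ordSpan F 1 η ζ, x * y ∈ ordSpan F 1 η ζ) ↔
      ∀ i j, ∃ p : Polynomial F, N i j = toRat p := by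
  constructor
  · intro h
    have hη : η ∈ ordSpan F 1 η ζ := ⟨0, 1, 0, by simp [toRat_zero, toRat_one]⟩
    have hζ : ζ ∈ ordSpan F 1 η ζ := ⟨0, 0, 1, by simp [toRat_zero, toRat_one]⟩
    have aux : ∀ t ∈ ordSpan F 1 η ζ, ∀ n : Fin 3 → RatFunc F,
        t = algebraMap (RatFunc F) K (n 0) + algebraMap (RatFunc F) K (n 1) * η +
          algebraMap (RatFunc F) K (n 2) * ζ → ∀ j, ∃ p : Polynomial F, n j = toRat p := by
      rintro t ⟨u, v, w, ht⟩ n hn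
      obtain ⟨e0, e1, e2⟩ := hind (n 0 - toRat u) (n 1 - toRat v) (n 2 - toRat w) (by
        simp only [map_sub]
        linear_combination ht - hn)
      intro j
      fin_cases j
      · exact ⟨u, sub_eq_zero.1 e0⟩
      · exact ⟨v, sub_eq_zero.1 e1⟩
      · exact ⟨w, sub_eq_zero.1 e2⟩
    intro i
    fin_cases i
    · exact aux _ (h _ hη _ hη) (N 0) h0
    · exact aux _ (h _ hζ _ hζ) (N 1) h1
    · exact aux _ (h _ hη _ hζ) (N 2) h2
  · intro h
    choose P hP using h
    simp only [hP] at h0 h1 h2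
    rintro x ⟨u, v, w, rfl⟩ y ⟨u', v', w', rfl⟩
    refine ⟨u * u' + v * v' * P 0 0 + w * w' * P 1 0 + (v * w' + w * v') * P 2 0,
      u * v' + v * u' + v * v' * P 0 1 + w * w' * P 1 1 + (v * w' + w * v') * P 2 1,
      u * w' + w * u' + v * v' * P 0 2 + w * w' * P 1 2 + (v * w' + w * v') * P 2 2, ?_⟩
    simp only [toRat_add, toRat_mul, map_add, map_mul]
    set f := fun p : Polynomial F => algebraMap (RatFunc F) K (toRat p) with hf
    linear_combination (f v * f v') * h0 + (f w * f w') * h1 + (f v * f w' + f w * f v') * h2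

/-- Let `K/k` be a degree-3 field extension with `k`-basis
`(1, ω₁, ω₂)` and `M₂` the unique matrix with `(ω₁², ω₂², ω₁ω₂)ᵗ = M₂(1,ω₁,ω₂)ᵗ`.
For `a, b, c ∈ A` with `a ≠ 0`, `c ≠ 0`, the `A`-submodule
`O = A·1 + A·(cω₁ + bω₂) + A·(aω₂)` of `K` is closed under multiplication if and
only if every entry of `M₁·M₂·H⁻¹` lies in `A`, where `H` has rows
`(1,0,0),(0,c,b),(0,0,a)` and `M₁` has rows `(c²,b²,2bc),(0,a²,0),(0,ab,ac)`. -/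
theorem stmt_3 {Fq : Type*} [Field Fq] [Fintype Fq]
    {K : Type*} [Field K] [Algebra (RatFunc Fq) K]
    (hdim : Module.finrank (RatFunc Fq) K = 3)
    (ω₁ ω₂ : K)
    (hli : LinearIndependent (RatFunc Fq) ![(1 : K), ω₁, ω₂])
    (M₂ : Matrix (Fin 3) (Fin 3) (RatFunc Fq))
    (hM₂a : ω₁ ^ 2 = algebraMap (RatFunc Fq) K (M₂ 0 0) +
      algebraMap (RatFunc Fq) K (M₂ 0 1) * ω₁ + algebraMap (RatFunc Fq) K (M₂ 0 2) * ω₂)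
    (hM₂b : ω₂ ^ 2 = algebraMap (RatFunc Fq) K (M₂ 1 0) +
      algebraMap (RatFunc Fq) K (M₂ 1 1) * ω₁ + algebraMap (RatFunc Fq) K (M₂ 1 2) * ω₂)
    (hM₂c : ω₁ * ω₂ = algebraMap (RatFunc Fq) K (M₂ 2 0) +
      algebraMap (RatFunc Fq) K (M₂ 2 1) * ω₁ + algebraMap (RatFunc Fq) K (M₂ 2 2) * ω₂)
    (a b c : Polynomial Fq) (ha : a ≠ 0) (hc : c ≠ 0) :
    (∀ x ∈ ordSpan Fq (1 : K)
        (algebraMap (RatFunc Fq) K (toRat c) * ω₁ + algebraMap (RatFunc Fq) K (toRat b) * ω₂)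
        (algebraMap (RatFunc Fq) K (toRat a) * ω₂),
      ∀ y ∈ ordSpan Fq (1 : K)
        (algebraMap (RatFunc Fq) K (toRat c) * ω₁ + algebraMap (RatFunc Fq) K (toRat b) * ω₂)
        (algebraMap (RatFunc Fq) K (toRat a) * ω₂),
      x * y ∈ ordSpan Fq (1 : K)
        (algebraMap (RatFunc Fq) K (toRat c) * ω₁ + algebraMap (RatFunc Fq) K (toRat b) * ω₂)
        (algebraMap (RatFunc Fq) K (toRat a) * ω₂)) ↔
    (∀ i j, ∃ p : Polynomial Fq,
      ((!![toRat c ^ 2, toRat b ^ 2, 2 * toRat b * toRat c;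
           0, toRat a ^ 2, 0;
           0, toRat a * toRat b, toRat a * toRat c] * M₂ *
        (!![1, 0, 0; 0, toRat c, toRat b; 0, 0, toRat a])⁻¹) i j) = toRat p) := by
  have hcK := toRat_ne_zero hc
  have haK := toRat_ne_zero ha
  set H : Matrix (Fin 3) (Fin 3) (RatFunc Fq) :=
    !![1, 0, 0; 0, toRat c, toRat b; 0, 0, toRat a] with hH
  set M₁ : Matrix (Fin 3) (Fin 3) (RatFunc Fq) :=
    !![toRat c ^ 2, toRat b ^ 2, 2 * toRat b * toRat c;
       0, toRat a ^ 2, 0;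
       0, toRat a * toRat b, toRat a * toRat c] with hM₁
  have hdet : IsUnit H.det := by
    simp [hH, Matrix.det_fin_three, hcK, haK]
  have hN : M₁ * M₂ * H⁻¹ * H = M₁ * M₂ := Matrix.nonsing_inv_mul_cancel_right _ _ hdet
  generalize M₁ * M₂ * H⁻¹ = N at hN
  have entry : ∀ i j, algebraMap (RatFunc Fq) K ((N * H) i j) =
      algebraMap (RatFunc Fq) K ((M₁ * M₂) i j) := fun i j => by rw [hN]
  simp only [Matrix.mul_apply, Fin.sum_univ_three, map_add, map_mul] at entry
  apply ordSpan_mul_iff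
  · intro p q r h
    obtain ⟨e0, e1, e2⟩ := coords_eq_zero hli p (q * toRat c) (q * toRat b + r * toRat a) (by
      simp only [map_add, map_mul]
      linear_combination h)
    have hq : q = 0 := (mul_eq_zero.1 e1).resolve_right hcK
    subst hq
    simp only [zero_mul, zero_add] at e2
    exact ⟨e0, rfl, (mul_eq_zero.1 e2).resolve_right haK⟩
  · have e0 := entry 0 0
    have e1 := entry 0 1
    have e2 := entry 0 2
    simp [hH, hM₁] at e0 e1 e2
    set φ := algebraMap (RatFunc Fq) K
    rw [map_ofNat φ 2] at e0 e1 e2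
    linear_combination φ (toRat c) ^ 2 * hM₂a + φ (toRat b) ^ 2 * hM₂b +
      2 * φ (toRat b) * φ (toRat c) * hM₂c - e0 - e1 * ω₁ - e2 * ω₂
  · have e0 := entry 1 0
    have e1 := entry 1 1
    have e2 := entry 1 2
    simp [hH, hM₁] at e0 e1 e2
    set φ := algebraMap (RatFunc Fq) K
    linear_combination φ (toRat a) ^ 2 * hM₂b - e0 - e1 * ω₁ - e2 * ω₂
  · have e0 := entry 2 0
    have e1 := entry 2 1
    have e2 := entry 2 2
    simp [hH, hM₁] at e0 e1 e2
    set φ := algebraMap (RatFunc Fq) K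
    linear_combination φ (toRat a) * φ (toRat b) * hM₂b + φ (toRat a) * φ (toRat c) * hM₂c -
      e0 - e1 * ω₁ - e2 * ω₂
end

section
/- π lies in the A-submodule A·1 + A·(c·ω₁ + b·ω₂) + A·(a·ω₂) of K if and only if c divides g in A and a divides (g/c)·b in A. -/
/-!
Since `3` is invertible in `𝔽_q`, the element `s = a₁ / 3` lies in `A`, and the definition of `ω₁`
reads `π = -s + g ω₁`. On the other side, `u + v (c ω₁ + b ω₂) + w a ω₂` has coordinates
`(u, v c, v b + w a)` in the independent family `(1, ω₁, ω₂)`. So `π` lies in the submodule iff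
`v c = g` and `v b + w a = 0` are solvable in `A`, where `u = -s` is always available. The first
equation forces `v = g / c`, and the second then says that `a` divides `(g / c) b`.
-/

open Polynomial

/-- The order of `1` in the additive group of `𝔽_q` divides `q`, so it is not `3`. -/
lemma three_ne_zero_of_card {Fq : Type*} [Field Fq] [Fintype Fq]
    (h3 : ¬ (3 ∣ Fintype.card Fq)) : (3 : Fq) ≠ 0 := by
  intro h
  have : addOrderOf (1 : Fq) = 3 := by
    have : Fact (Nat.Prime 3) := ⟨Nat.prime_three⟩
    exact addOrderOf_eq_prime (by simpa using h) one_ne_zero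
  exact h3 (this ▸ addOrderOf_dvd_card)

/-- `q` not divisible by 3, `K = k(π)` a degree-3 extension
generated by a root `π` of the irreducible cubic `x³ + a₁x² + a₂x + a₃ ∈ A[x]`,
`g ∈ A` nonzero, `π̃ = (π + a₁/3)/g`, `ω₁ = π̃`, and `ω₂ ∈ K` such that
`(1, ω₁, ω₂)` is `k`-linearly independent.  For `a, b, c ∈ A` with `a ≠ 0`,
`c ≠ 0`: `π ∈ A·1 + A·(cω₁ + bω₂) + A·(aω₂)` if and only if `c ∣ g` and
`a ∣ (g/c)·b` in `A`. -/
theorem stmt_4 {Fq : Type*} [Field Fq] [Fintype Fq]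
    (h3 : ¬ (3 ∣ Fintype.card Fq))
    {K : Type*} [Field K] [Algebra (RatFunc Fq) K]
    (a₁ a₂ a₃ : Polynomial Fq)
    (hirr : Irreducible ((X : Polynomial (RatFunc Fq)) ^ 3 + C (toRat a₁) * X ^ 2 +
      C (toRat a₂) * X + C (toRat a₃)))
    (π : K)
    (hπ : π ^ 3 + algebraMap (RatFunc Fq) K (toRat a₁) * π ^ 2 +
      algebraMap (RatFunc Fq) K (toRat a₂) * π + algebraMap (RatFunc Fq) K (toRat a₃) = 0)
    (hgen : Algebra.adjoin (RatFunc Fq) {π} = ⊤)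
    (g : Polynomial Fq) (hg : g ≠ 0)
    (πt ω₁ ω₂ : K)
    (hπt : πt = (π + algebraMap (RatFunc Fq) K (toRat a₁ / 3)) /
      algebraMap (RatFunc Fq) K (toRat g))
    (hω₁ : ω₁ = πt)
    (hli : LinearIndependent (RatFunc Fq) ![(1 : K), ω₁, ω₂])
    (a b c : Polynomial Fq) (ha : a ≠ 0) (hc : c ≠ 0) :
    π ∈ ordSpan Fq (1 : K)
        (algebraMap (RatFunc Fq) K (toRat c) * ω₁ + algebraMap (RatFunc Fq) K (toRat b) * ω₂)
        (algebraMap (RatFunc Fq) K (toRat a) * ω₂) ↔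
      (c ∣ g ∧ a ∣ (g / c) * b) := by
  have h3' : (3 : Fq) ≠ 0 := three_ne_zero_of_card h3
  have hinj : Function.Injective (algebraMap (Polynomial Fq) (RatFunc Fq)) :=
    RatFunc.algebraMap_injective Fq
  obtain ⟨s, hs⟩ : ∃ s : Polynomial Fq, a₁ = 3 * s := by
    refine ⟨C (3⁻¹) * a₁, ?_⟩
    rw [← mul_assoc, ← C_ofNat, ← C_mul]
    simp [h3']
  have h3R : (3 : RatFunc Fq) ≠ 0 := by
    intro h
    have := (map_ofNat (algebraMap Fq (RatFunc Fq)) 3).trans h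
    exact h3' ((map_eq_zero _).1 this)
  have hs' : toRat a₁ / 3 = toRat s := by
    rw [div_eq_iff h3R, hs, toRat, toRat, map_mul, map_ofNat, mul_comm]
  have hg' : algebraMap (RatFunc Fq) K (toRat g) ≠ 0 := by
    simpa [toRat] using hg
  have hpi : π = algebraMap (RatFunc Fq) K (toRat g) * ω₁ -
      algebraMap (RatFunc Fq) K (toRat s) := by
    rw [hω₁, hπt, hs', mul_div_cancel₀ _ hg']
    ring
  rw [Fintype.linearIndependent_iff] at hli
  constructor
  · rintro ⟨u, v, w, h⟩
    -- Subtracting the two expressions for `π` gives a linear relation between `1`, `ω₁`, `ω₂`.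
    have key := hli ![toRat (u + s), toRat (v * c - g), toRat (v * b + w * a)] (by
      rw [hpi] at h
      simp only [Fin.sum_univ_three, Algebra.smul_def, toRat, map_add, map_sub, map_mul,
        Matrix.cons_val] at h ⊢
      linear_combination -h)
    have h1 : v * c - g = 0 := hinj (by simpa [toRat] using key 1)
    have h2 : v * b + w * a = 0 := hinj (by simpa [toRat] using key 2)
    have hgv : g = c * v := by linear_combination -h1
    refine ⟨⟨v, hgv⟩, ?_⟩
    rw [hgv, mul_div_cancel_left₀ _ hc]
    exact ⟨-w, by linear_combination h2⟩
  · rintro ⟨⟨d, rfl⟩, hd⟩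
    rw [mul_div_cancel_left₀ _ hc] at hd
    obtain ⟨e, he⟩ := hd
    refine ⟨-s, d, -e, ?_⟩
    have he' := congrArg (fun p => algebraMap (RatFunc Fq) K (toRat p)) he
    rw [hpi]
    simp only [toRat, map_mul, map_neg] at he' ⊢
    linear_combination -ω₂ * he'
end

section
/- Suppose g = 1 and deg(b) < deg(a). If π ∈ O := A·1 + A·(c·ω₁ + b·ω₂) + A·(a·ω₂), then c is a unit (c ∈ 𝔽_q^×) and b = 0; consequently O = A·1 + A·ω₁ + A·(a·ω₂). -/
/-!
Since `g = 1`, we have `ω₁ = π + a₁/3`. Writing the membership of `π` as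
`ω₁ - a₁/3 = u + v (c ω₁ + b ω₂) + w (a ω₂)` with `u, v, w ∈ A` and comparing coordinates in the
linearly independent family `(1, ω₁, ω₂)` gives `v c = 1` and `v b + w a = 0`. The first equation
says that `c` is a unit. Multiplying the second by `c` gives `b = -c w a`, so `a ∣ b` and the
degree hypothesis forces `b = 0`. Replacing the generator `c ω₁` by its unit multiple `ω₁`
does not change the `A`-span.
-/


open Polynomial

/-- In the setting of Statement 4, suppose `g = 1` and
`deg b < deg a`.  If `π ∈ O := A·1 + A·(cω₁ + bω₂) + A·(aω₂)`, then `c` is a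
unit and `b = 0`; consequently `O = A·1 + A·ω₁ + A·(aω₂)`. -/
theorem stmt_5 {Fq : Type*} [Field Fq] [Fintype Fq]
    (h3 : ¬ (3 ∣ Fintype.card Fq))
    {K : Type*} [Field K] [Algebra (RatFunc Fq) K]
    (a₁ a₂ a₃ : Polynomial Fq)
    (hirr : Irreducible ((X : Polynomial (RatFunc Fq)) ^ 3 + C (toRat a₁) * X ^ 2 +
      C (toRat a₂) * X + C (toRat a₃)))
    (π : K)
    (hπ : π ^ 3 + algebraMap (RatFunc Fq) K (toRat a₁) * π ^ 2 +
      algebraMap (RatFunc Fq) K (toRat a₂) * π + algebraMap (RatFunc Fq) K (toRat a₃) = 0)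
    (hgen : Algebra.adjoin (RatFunc Fq) {π} = ⊤)
    (g : Polynomial Fq) (hg : g ≠ 0) (hg1 : g = 1)
    (πt ω₁ ω₂ : K)
    (hπt : πt = (π + algebraMap (RatFunc Fq) K (toRat a₁ / 3)) /
      algebraMap (RatFunc Fq) K (toRat g))
    (hω₁ : ω₁ = πt)
    (hli : LinearIndependent (RatFunc Fq) ![(1 : K), ω₁, ω₂])
    (a b c : Polynomial Fq) (ha : a ≠ 0) (hc : c ≠ 0)
    (hdeg : b.degree < a.degree)
    (hmem : π ∈ ordSpan Fq (1 : K)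
        (algebraMap (RatFunc Fq) K (toRat c) * ω₁ + algebraMap (RatFunc Fq) K (toRat b) * ω₂)
        (algebraMap (RatFunc Fq) K (toRat a) * ω₂)) :
    IsUnit c ∧ b = 0 ∧
      ordSpan Fq (1 : K)
        (algebraMap (RatFunc Fq) K (toRat c) * ω₁ + algebraMap (RatFunc Fq) K (toRat b) * ω₂)
        (algebraMap (RatFunc Fq) K (toRat a) * ω₂) =
      ordSpan Fq (1 : K) ω₁ (algebraMap (RatFunc Fq) K (toRat a) * ω₂) := by
  subst hg1
  have hw : ω₁ = π + algebraMap (RatFunc Fq) K (toRat a₁ / 3) := by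
    rw [hω₁, hπt]
    simp [toRat]
  obtain ⟨u, v, w, h⟩ := hmem
  rw [Fintype.linearIndependent_iff] at hli
  -- the coordinates of the relation `u + v (c ω₁ + b ω₂) + w (a ω₂) - π = 0`
  have key := hli ![toRat u + toRat a₁ / 3, toRat v * toRat c - 1,
    toRat v * toRat b + toRat w * toRat a] (by
      simp only [Fin.sum_univ_three, Matrix.cons_val, Algebra.smul_def, map_add, map_sub,
        map_mul, map_one]
      linear_combination -h - hw)
  have inj : Function.Injective (algebraMap (Polynomial Fq) (RatFunc Fq)) :=
    IsFractionRing.injective _ _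
  have hvc : v * c = 1 := by
    apply inj
    have := key 1
    simp only [Matrix.cons_val, toRat] at this
    rw [map_mul, map_one]
    exact sub_eq_zero.mp this
  have hvb : v * b + w * a = 0 := by
    apply inj
    have := key 2
    simp only [Matrix.cons_val, toRat] at this
    rw [map_add, map_mul, map_mul, map_zero]
    exact this
  have hb : b = 0 := by
    refine Polynomial.eq_zero_of_dvd_of_degree_lt (p := a) ⟨-(c * w), ?_⟩ hdeg
    linear_combination c * hvb - b * hvc
  refine ⟨IsUnit.of_mul_eq_one_right v hvc, hb, ?_⟩
  subst hb
  have hvc' : algebraMap (RatFunc Fq) K (toRat v) * algebraMap (RatFunc Fq) K (toRat c) = 1 := by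
    simp only [toRat, ← map_mul, hvc, map_one]
  have h0 : toRat (0 : Polynomial Fq) = 0 := by simp [toRat]
  ext t
  constructor
  · rintro ⟨x, y, z, rfl⟩
    refine ⟨x, y * c, z, ?_⟩
    have : toRat (y * c) = toRat y * toRat c := by simp [toRat]
    rw [this, h0, map_mul, map_zero]
    ring
  · rintro ⟨x, y, z, rfl⟩
    refine ⟨x, y * v, z, ?_⟩
    have : toRat (y * v) = toRat y * toRat v := by simp [toRat]
    rw [this, h0, map_mul, map_zero]
    linear_combination -(algebraMap (RatFunc Fq) K (toRat y) * ω₁) * hvc'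
end

section
/- A subset O ⊆ K is an A-order of K containing π if and only if there exists a nonzero a ∈ A such that O = A·1 + A·π̃ + A·(a·ω₂) and every entry of M_a·M₂·H_a⁻¹ lies in A, where M_a is the matrix with rows (1,0,0), (0,a²,0), (0,0,a) and H_a is the diagonal matrix diag(1,1,a). Moreover, any such a divides I in A. -/
/-!
The orders containing `π` are classified by their position inside `O_K = A + A·π̃ + A·ω₂`.

An order `O ∋ π` consists of integral elements, so `O ⊆ O_K`, and it contains `1` and
`π̃ = π + a₁/3` (3 is a unit of `𝔽_q`). Hence `O` is determined by the ideal `{c ∈ A | c·ω₂ ∈ O}`,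
which contains `I ≠ 0` because `I·ω₂ = α₂ + β₂·π̃ + π̃²`; as `A` is a PID the ideal is generated by
some `a ≠ 0`, and `O = A + A·π̃ + A·(a·ω₂)`.

Conversely `A + A·π̃ + A·(a·ω₂)` is a ring exactly when it contains the three products
`π̃²`, `(a·ω₂)²`, `π̃·(a·ω₂)` (`exists_subalgebra`). Since `1, π̃, ω₂` are independent over `k`, the
coordinates of these products with respect to `1, π̃, a·ω₂` are well defined; they are the rows of
`M_a·M₂·H_a⁻¹`, so the ring condition is integrality of that matrix (`entries_iff`). Its entry in
position `(0, 2)` is `I/a`, which gives `a ∣ I`.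
-/

open Polynomial

/-- An `A`-order of `K`: a subring of `K` which is finitely generated as an
`A`-module and contains a `k`-basis of `K`. -/
def IsAOrder (Fq : Type*) [Field Fq] {K : Type*} [Field K] [Algebra (RatFunc Fq) K]
    [Algebra (Polynomial Fq) K] (O : Set K) : Prop :=
  (∃ S : Subring K, (S : Set K) = O) ∧
  (∃ N : Submodule (Polynomial Fq) K, (N : Set K) = O ∧ N.FG) ∧
  (∃ s : Set K, s ⊆ O ∧ LinearIndependent (RatFunc Fq) (fun x : s => (x : K)) ∧
    Submodule.span (RatFunc Fq) s = ⊤)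

/-- The span of `1, x, y` is a subalgebra as soon as it contains `x²`, `y²` and `xy`. -/
lemma exists_subalgebra {R B : Type*} [CommRing R] [CommRing B] [Algebra R B] {x y : B}
    (hxx : x ^ 2 ∈ Submodule.span R {1, x, y}) (hyy : y ^ 2 ∈ Submodule.span R {1, x, y})
    (hxy : x * y ∈ Submodule.span R {1, x, y}) :
    ∃ S : Subalgebra R B, Subalgebra.toSubmodule S = Submodule.span R {1, x, y} := by
  have h1 : (1 : B) ∈ Submodule.span R {1, x, y} := Submodule.subset_span (by simp)
  have hx : x ∈ Submodule.span R {1, x, y} := Submodule.subset_span (by simp)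
  have hy : y ∈ Submodule.span R {1, x, y} := Submodule.subset_span (by simp)
  have hmul : Submodule.span R {1, x, y} * Submodule.span R {1, x, y} ≤
      Submodule.span R {1, x, y} := by
    rw [Submodule.span_mul_span, Submodule.span_le]
    rintro _ ⟨s, hs, t, ht, rfl⟩
    simp only [Set.mem_insert_iff, Set.mem_singleton_iff] at hs ht
    rw [pow_two] at hxx hyy
    have hyx := hxy
    rw [mul_comm] at hyx
    rcases hs with rfl | rfl | rfl <;> rcases ht with rfl | rfl | rfl <;>
      simp only [one_mul, mul_one, SetLike.mem_coe] <;> assumption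
  exact ⟨(Submodule.span R {1, x, y}).toSubalgebra h1
    fun s t hs ht => hmul (Submodule.mul_mem_mul hs ht), by simp⟩

/-- Coordinates with respect to a `k`-independent triple `1, x, y` are unique. -/
lemma coords_unique {Fq : Type*} [Field Fq] {K : Type*} [Field K]
    [Algebra (RatFunc Fq) K] {x y : K} (hli : LinearIndependent (RatFunc Fq) ![(1 : K), x, y])
    {m n : Fin 3 → RatFunc Fq}
    (h : algebraMap (RatFunc Fq) K (m 0) + algebraMap (RatFunc Fq) K (m 1) * x +
        algebraMap (RatFunc Fq) K (m 2) * y =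
      algebraMap (RatFunc Fq) K (n 0) + algebraMap (RatFunc Fq) K (n 1) * x +
        algebraMap (RatFunc Fq) K (n 2) * y) : m = n := by
  have := Fintype.linearIndependent_iff.mp hli (m - n) (by
    simp only [Fin.sum_univ_three, Algebra.smul_def, Pi.sub_apply, map_sub]
    simp
    linear_combination h)
  exact sub_eq_zero.mp (funext this)

section
variable {Fq : Type*} [Field Fq] {K : Type*} [Field K] [Algebra (RatFunc Fq) K]
  [Algebra (Polynomial Fq) K] [IsScalarTower (Polynomial Fq) (RatFunc Fq) K]

lemma algebraMap_toRat (p : Polynomial Fq) :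
    algebraMap (RatFunc Fq) K (toRat p) = algebraMap (Polynomial Fq) K p :=
  (IsScalarTower.algebraMap_apply _ _ _ p).symm

lemma toRat_ne_zero_s6 {a : Polynomial Fq} (ha : a ≠ 0) : toRat a ≠ 0 := by
  simpa [toRat] using ha

lemma ordSpan_eq_span (x y z : K) :
    ordSpan Fq x y z = (Submodule.span (Polynomial Fq) {x, y, z} : Set K) := by
  ext t
  simp only [ordSpan, Set.mem_ofPred_eq, SetLike.mem_coe, Submodule.mem_span_triple,
    algebraMap_toRat, Algebra.smul_def, eq_comm]

/-- An element with `k`-coordinates `m` in the basis `1, x, y` lies in the `A`-span of `1, x, a·y`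
if and only if its coordinates `m 0, m 1, m 2 / a` in the rescaled basis are polynomials. -/
lemma mem_span_iff {x y z : K} (hli : LinearIndependent (RatFunc Fq) ![(1 : K), x, y])
    {a : Polynomial Fq} (ha : a ≠ 0) (m : Fin 3 → RatFunc Fq)
    (hz : z = algebraMap (RatFunc Fq) K (m 0) + algebraMap (RatFunc Fq) K (m 1) * x +
      algebraMap (RatFunc Fq) K (m 2) * y) :
    z ∈ Submodule.span (Polynomial Fq) {1, x, algebraMap (RatFunc Fq) K (toRat a) * y} ↔
      (∃ p, m 0 = toRat p) ∧ (∃ p, m 1 = toRat p) ∧ ∃ p, m 2 * (toRat a)⁻¹ = toRat p := by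
  have ha' : toRat a ≠ 0 := toRat_ne_zero_s6 ha
  rw [← SetLike.mem_coe, ← ordSpan_eq_span]
  constructor
  · rintro ⟨u, v, w, h⟩
    have := coords_unique hli (m := m) (n := ![toRat u, toRat v, toRat w * toRat a]) (by
      rw [← hz, h]
      simp
      ring)
    subst this
    exact ⟨⟨u, rfl⟩, ⟨v, rfl⟩, w, by simp [ha']⟩
  · rintro ⟨⟨u, hu⟩, ⟨v, hv⟩, w, hw⟩
    refine ⟨u, v, w, ?_⟩
    have hw' : m 2 = toRat w * toRat a := by rw [← hw]; field_simp
    rw [hz, hu, hv, hw', map_mul]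
    ring

/-- The entries of `M_a·M₂·H_a⁻¹`. -/
lemma matrix_eq {a : RatFunc Fq} (ha : a ≠ 0) (M : Matrix (Fin 3) (Fin 3) (RatFunc Fq)) :
    !![1, 0, 0; 0, a ^ 2, 0; 0, 0, a] * M * (!![1, 0, 0; 0, 1, 0; 0, 0, a])⁻¹ =
      !![M 0 0, M 0 1, M 0 2 * a⁻¹; a ^ 2 * M 1 0, a ^ 2 * M 1 1, a ^ 2 * M 1 2 * a⁻¹;
        a * M 2 0, a * M 2 1, a * M 2 2 * a⁻¹] := by
  have hinv : (!![1, 0, 0; 0, 1, 0; 0, 0, a] : Matrix (Fin 3) (Fin 3) (RatFunc Fq))⁻¹ =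
      !![1, 0, 0; 0, 1, 0; 0, 0, a⁻¹] := by
    apply Matrix.inv_eq_right_inv
    ext i j
    fin_cases i <;> fin_cases j <;> simp [Matrix.mul_apply, Fin.sum_univ_three, ha]
  rw [hinv]
  ext i j
  fin_cases i <;> fin_cases j <;>
    simp [Matrix.mul_apply, Matrix.vecMul, dotProduct, Fin.sum_univ_three]

/-- Integrality of `M_a·M·H_a⁻¹` says that the products `x²`, `(ay)²` and `x·(ay)` lie in
`A·1 + A·x + A·(ay)`. -/
lemma entries_iff {x y : K} (hli : LinearIndependent (RatFunc Fq) ![(1 : K), x, y])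
    {a : Polynomial Fq} (ha : a ≠ 0) (M : Matrix (Fin 3) (Fin 3) (RatFunc Fq))
    (h0 : x ^ 2 = algebraMap (RatFunc Fq) K (M 0 0) + algebraMap (RatFunc Fq) K (M 0 1) * x +
      algebraMap (RatFunc Fq) K (M 0 2) * y)
    (h1 : y ^ 2 = algebraMap (RatFunc Fq) K (M 1 0) + algebraMap (RatFunc Fq) K (M 1 1) * x +
      algebraMap (RatFunc Fq) K (M 1 2) * y)
    (h2 : x * y = algebraMap (RatFunc Fq) K (M 2 0) + algebraMap (RatFunc Fq) K (M 2 1) * x +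
      algebraMap (RatFunc Fq) K (M 2 2) * y) :
    (∀ i j, ∃ p : Polynomial Fq, ((!![1, 0, 0; 0, toRat a ^ 2, 0; 0, 0, toRat a] * M *
        (!![1, 0, 0; 0, 1, 0; 0, 0, toRat a])⁻¹) i j) = toRat p) ↔
      x ^ 2 ∈ Submodule.span (Polynomial Fq)
          {1, x, algebraMap (RatFunc Fq) K (toRat a) * y} ∧
      (algebraMap (RatFunc Fq) K (toRat a) * y) ^ 2 ∈ Submodule.span (Polynomial Fq)
          {1, x, algebraMap (RatFunc Fq) K (toRat a) * y} ∧
      x * (algebraMap (RatFunc Fq) K (toRat a) * y) ∈ Submodule.span (Polynomial Fq)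
          {1, x, algebraMap (RatFunc Fq) K (toRat a) * y} := by
  rw [matrix_eq (toRat_ne_zero_s6 ha),
    mem_span_iff hli ha (M 0) h0,
    mem_span_iff hli ha (fun j => toRat a ^ 2 * M 1 j) (by
      rw [mul_pow, h1]; simp only [map_mul, map_pow]; ring),
    mem_span_iff hli ha (fun j => toRat a * M 2 j) (by
      rw [mul_left_comm, h2]; simp only [map_mul]; ring)]
  simp only [Fin.forall_fin_succ, Fin.forall_fin_zero, and_true]
  simp [-mul_eq_mul_left_iff]

end

/-- In the setting described (cubic `M` irreducible, `K = k(π)`,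
`O_K` with `A`-basis `(1, π̃, ω₂)`, no irreducible `p` with `p² ∣ b₁` and `p³ ∣ b₂`),
a subset `O ⊆ K` is an `A`-order of `K` containing `π` if and only if there is a
nonzero `a ∈ A` with `O = A·1 + A·π̃ + A·(a·ω₂)` and all entries of
`M_a·M₂·H_a⁻¹` in `A`; moreover any such `a` divides `I`. -/
theorem stmt_6 {Fq : Type*} [Field Fq] [Fintype Fq]
    (h3 : ¬ (3 ∣ Fintype.card Fq))
    {K : Type*} [Field K] [Algebra (RatFunc Fq) K] [Algebra (Polynomial Fq) K]
    [IsScalarTower (Polynomial Fq) (RatFunc Fq) K]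
    (a₁ a₂ a₃ : Polynomial Fq)
    (hirr : Irreducible ((X : Polynomial (RatFunc Fq)) ^ 3 + C (toRat a₁) * X ^ 2 +
      C (toRat a₂) * X + C (toRat a₃)))
    (π : K)
    (hπ : π ^ 3 + algebraMap (RatFunc Fq) K (toRat a₁) * π ^ 2 +
      algebraMap (RatFunc Fq) K (toRat a₂) * π + algebraMap (RatFunc Fq) K (toRat a₃) = 0)
    (hgen : Algebra.adjoin (RatFunc Fq) {π} = ⊤)
    (b₁ b₂ : Polynomial Fq)
    (hb₁ : toRat b₁ = toRat a₂ - toRat a₁ ^ 2 / 3)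
    (hb₂ : toRat b₂ = 2 * toRat a₁ ^ 3 / 27 - toRat a₁ * toRat a₂ / 3 + toRat a₃)
    (hnop : ¬ ∃ p : Polynomial Fq, Irreducible p ∧ p ^ 2 ∣ b₁ ∧ p ^ 3 ∣ b₂)
    (πt : K) (hπt : πt = π + algebraMap (RatFunc Fq) K (toRat a₁ / 3))
    (I α₂ β₂ : Polynomial Fq) (hI : I ≠ 0)
    (ω₂ : K)
    (hω₂ : ω₂ = (algebraMap (RatFunc Fq) K (toRat α₂) +
      algebraMap (RatFunc Fq) K (toRat β₂) * πt + πt ^ 2) /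
      algebraMap (RatFunc Fq) K (toRat I))
    (hOKspan : Submodule.span (Polynomial Fq) {(1 : K), πt, ω₂} =
      Subalgebra.toSubmodule (integralClosure (Polynomial Fq) K))
    (hOKli : LinearIndependent (Polynomial Fq) ![(1 : K), πt, ω₂])
    (M₂ : Matrix (Fin 3) (Fin 3) (RatFunc Fq))
    (hM₂a : πt ^ 2 = algebraMap (RatFunc Fq) K (M₂ 0 0) +
      algebraMap (RatFunc Fq) K (M₂ 0 1) * πt + algebraMap (RatFunc Fq) K (M₂ 0 2) * ω₂)
    (hM₂b : ω₂ ^ 2 = algebraMap (RatFunc Fq) K (M₂ 1 0) +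
      algebraMap (RatFunc Fq) K (M₂ 1 1) * πt + algebraMap (RatFunc Fq) K (M₂ 1 2) * ω₂)
    (hM₂c : πt * ω₂ = algebraMap (RatFunc Fq) K (M₂ 2 0) +
      algebraMap (RatFunc Fq) K (M₂ 2 1) * πt + algebraMap (RatFunc Fq) K (M₂ 2 2) * ω₂)
    (O : Set K) :
    ((IsAOrder Fq O ∧ π ∈ O) ↔
      ∃ a : Polynomial Fq, a ≠ 0 ∧
        (∀ i j, ∃ p : Polynomial Fq,
          ((!![1, 0, 0; 0, toRat a ^ 2, 0; 0, 0, toRat a] * M₂ *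
            (!![1, 0, 0; 0, 1, 0; 0, 0, toRat a])⁻¹) i j) = toRat p) ∧
        O = ordSpan Fq (1 : K) πt (algebraMap (RatFunc Fq) K (toRat a) * ω₂)) ∧
    (∀ a : Polynomial Fq, a ≠ 0 →
      (∀ i j, ∃ p : Polynomial Fq,
        ((!![1, 0, 0; 0, toRat a ^ 2, 0; 0, 0, toRat a] * M₂ *
          (!![1, 0, 0; 0, 1, 0; 0, 0, toRat a])⁻¹) i j) = toRat p) →
      O = ordSpan Fq (1 : K) πt (algebraMap (RatFunc Fq) K (toRat a) * ω₂) →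
      a ∣ I) := by
  have h3' : (3 : Fq) ≠ 0 := by
    intro h
    have hdvd : ringChar Fq ∣ 3 := ringChar.dvd (by exact_mod_cast h)
    have hc : ringChar Fq = 3 :=
      (Nat.prime_dvd_prime_iff_eq (CharP.char_is_prime Fq (ringChar Fq)) Nat.prime_three).mp hdvd
    apply h3
    rw [← hc]
    exact ringChar.dvd (FiniteField.cast_card_eq_zero Fq)
  have hk3 : toRat a₁ / 3 = toRat (C (3⁻¹ : Fq) * a₁) := by
    have h3k : (3 : RatFunc Fq) = toRat (C (3 : Fq)) := by
      rw [show C (3 : Fq) = 3 from map_ofNat C 3]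
      exact (map_ofNat (algebraMap (Polynomial Fq) (RatFunc Fq)) 3).symm
    have h3k0 : (3 : RatFunc Fq) ≠ 0 := by
      rw [h3k]
      exact toRat_ne_zero_s6 (C_ne_zero.mpr h3')
    rw [div_eq_iff h3k0, h3k]
    unfold toRat
    rw [← map_mul, mul_right_comm, ← C_mul, inv_mul_cancel₀ h3', C_1, one_mul]
  have hπt' : πt = π + algebraMap (Polynomial Fq) K (C (3⁻¹ : Fq) * a₁) := by
    rw [hπt, hk3, algebraMap_toRat]
  have hli : LinearIndependent (RatFunc Fq) ![(1 : K), πt, ω₂] :=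
    (LinearIndependent.iff_fractionRing (Polynomial Fq) (RatFunc Fq)).mp hOKli
  have hI' : algebraMap (RatFunc Fq) K (toRat I) ≠ 0 := by
    simpa using toRat_ne_zero_s6 hI
  have hIω : algebraMap (RatFunc Fq) K (toRat I) * ω₂ = algebraMap (RatFunc Fq) K (toRat α₂) +
      algebraMap (RatFunc Fq) K (toRat β₂) * πt + πt ^ 2 := by
    rw [hω₂, mul_div_cancel₀ _ hI']
  have hM02 : M₂ 0 2 = toRat I := by
    have := coords_unique hli (m := M₂ 0) (n := ![-toRat α₂, -toRat β₂, toRat I]) (by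
      rw [← hM₂a]
      simp
      linear_combination -hIω)
    simp [this]
  -- The `k`-span of `1, π̃, ω₂` is a ring containing `π`, hence all of `K = k(π)`.
  have htop : Submodule.span (RatFunc Fq) {(1 : K), πt, ω₂} = ⊤ := by
    have key : ∀ z : K, ∀ m : Fin 3 → RatFunc Fq, z = algebraMap (RatFunc Fq) K (m 0) +
        algebraMap (RatFunc Fq) K (m 1) * πt + algebraMap (RatFunc Fq) K (m 2) * ω₂ →
        z ∈ Submodule.span (RatFunc Fq) {(1 : K), πt, ω₂} := fun z m hz =>
      Submodule.mem_span_triple.mpr ⟨m 0, m 1, m 2, by simp [hz, Algebra.smul_def]⟩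
    obtain ⟨S, hS⟩ := exists_subalgebra (key _ (M₂ 0) hM₂a) (key _ (M₂ 1) hM₂b)
      (key _ (M₂ 2) hM₂c)
    have hπS : π ∈ S := by
      have h1 : πt ∈ S := by
        rw [← Subalgebra.mem_toSubmodule, hS]
        exact Submodule.subset_span (by simp)
      have : π = πt - algebraMap (RatFunc Fq) K (toRat a₁ / 3) := by rw [hπt]; ring
      rw [this]
      exact S.sub_mem h1 (S.algebraMap_mem _)
    have hStop : S = ⊤ := by
      rw [eq_top_iff, ← hgen]
      exact Algebra.adjoin_le (by simpa using hπS)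
    rw [← hS, hStop, Algebra.top_toSubmodule]
  refine ⟨⟨?_, ?_⟩, ?_⟩
  · rintro ⟨⟨⟨S, hS⟩, ⟨N, hN, hfg⟩, -⟩, hπO⟩
    have hSN : ∀ z, z ∈ S ↔ z ∈ N := fun z => by
      rw [← SetLike.mem_coe, ← SetLike.mem_coe, hS, hN]
    have h1N : (1 : K) ∈ N := (hSN 1).mp S.one_mem
    have hmulN : ∀ s t, s ∈ N → t ∈ N → s * t ∈ N := fun s t hs ht =>
      (hSN _).mp (S.mul_mem ((hSN s).mpr hs) ((hSN t).mpr ht))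
    have halgN : ∀ p : Polynomial Fq, algebraMap (Polynomial Fq) K p ∈ N := fun p => by
      rw [Algebra.algebraMap_eq_smul_one]
      exact N.smul_mem p h1N
    have hπtN : πt ∈ N := by
      rw [hπt']
      refine N.add_mem ?_ (halgN _)
      rw [← SetLike.mem_coe, hN]
      exact hπO
    -- A finitely generated subalgebra is integral, so `O ⊆ O_K`.
    have hNle : N ≤ Submodule.span (Polynomial Fq) {(1 : K), πt, ω₂} := by
      rw [hOKspan]
      intro z hz
      refine IsIntegral.of_mem_of_fg (N.toSubalgebra h1N hmulN) ?_ z (by simpa using hz)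
      simpa using hfg
    -- The ideal of all `c` with `c • ω₂ ∈ O`.
    let J : Ideal (Polynomial Fq) := N.comap (LinearMap.toSpanSingleton (Polynomial Fq) K ω₂)
    have hJ : ∀ c, c ∈ J ↔ c • ω₂ ∈ N := fun c => Iff.rfl
    obtain ⟨a, ha⟩ := (IsPrincipalIdealRing.principal J).principal
    have hIJ : I ∈ J := by
      rw [hJ, Algebra.smul_def, ← algebraMap_toRat, hIω, algebraMap_toRat, algebraMap_toRat,
        pow_two]
      exact N.add_mem (N.add_mem (halgN _) (hmulN _ _ (halgN _) hπtN)) (hmulN _ _ hπtN hπtN)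
    have ha0 : a ≠ 0 := by
      rintro rfl
      rw [ha, Submodule.mem_span_singleton] at hIJ
      obtain ⟨c, hc⟩ := hIJ
      exact hI (by simpa using hc.symm)
    have haN : algebraMap (RatFunc Fq) K (toRat a) * ω₂ ∈ N := by
      rw [algebraMap_toRat, ← Algebra.smul_def, ← hJ, ha]
      exact Submodule.mem_span_singleton_self a
    have hNeq : N = Submodule.span (Polynomial Fq)
        {1, πt, algebraMap (RatFunc Fq) K (toRat a) * ω₂} := by
      apply le_antisymm
      · intro z hz
        obtain ⟨u, v, w, rfl⟩ := Submodule.mem_span_triple.mp (hNle hz)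
        have hw : w • ω₂ ∈ N :=
          (N.add_mem_iff_right (N.add_mem (N.smul_mem u h1N) (N.smul_mem v hπtN))).mp hz
        rw [← hJ, ha, Submodule.mem_span_singleton] at hw
        obtain ⟨c, rfl⟩ := hw
        refine Submodule.mem_span_triple.mpr ⟨u, v, c, ?_⟩
        rw [algebraMap_toRat, ← Algebra.smul_def, smul_smul, smul_eq_mul]
      · rw [Submodule.span_le]
        rintro z (rfl | rfl | rfl)
        exacts [h1N, hπtN, haN]
    refine ⟨a, ha0, ?_, ?_⟩
    · rw [entries_iff hli ha0 M₂ hM₂a hM₂b hM₂c, ← hNeq, pow_two, pow_two]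
      exact ⟨hmulN _ _ hπtN hπtN, hmulN _ _ haN haN, hmulN _ _ hπtN haN⟩
    · rw [ordSpan_eq_span, ← hNeq, hN]
  · rintro ⟨a, ha0, hent, rfl⟩
    rw [entries_iff hli ha0 M₂ hM₂a hM₂b hM₂c] at hent
    obtain ⟨S, hS⟩ := exists_subalgebra hent.1 hent.2.1 hent.2.2
    have hS' : (S : Set K) = ordSpan Fq 1 πt (algebraMap (RatFunc Fq) K (toRat a) * ω₂) := by
      rw [ordSpan_eq_span, ← hS, Subalgebra.coe_toSubmodule]
    have hsub : {1, πt, algebraMap (RatFunc Fq) K (toRat a) * ω₂} ⊆ (S : Set K) := by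
      rw [hS', ordSpan_eq_span]
      exact Submodule.subset_span
    refine ⟨⟨⟨S.toSubring, hS'⟩, ⟨Subalgebra.toSubmodule S, hS', ?_⟩, ?_⟩, ?_⟩
    · rw [hS]
      exact Submodule.fg_span (Set.toFinite _)
    · obtain ⟨s, hs, hspan, hsli⟩ := exists_linearIndependent (RatFunc Fq)
        ({1, πt, algebraMap (RatFunc Fq) K (toRat a) * ω₂} : Set K)
      refine ⟨s, ?_, hsli, ?_⟩
      · rw [← hS']
        exact hs.trans hsub
      · rw [hspan, eq_top_iff, ← htop, Submodule.span_le]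
        have hω : ω₂ ∈ Submodule.span (RatFunc Fq)
            {1, πt, algebraMap (RatFunc Fq) K (toRat a) * ω₂} := by
          have : ω₂ = (toRat a)⁻¹ • (algebraMap (RatFunc Fq) K (toRat a) * ω₂) := by
            rw [← Algebra.smul_def, smul_smul, inv_mul_cancel₀ (toRat_ne_zero_s6 ha0), one_smul]
          rw [this]
          refine Submodule.smul_mem _ _ (Submodule.subset_span ?_)
          rw [← this]
          simp
        rintro z (rfl | rfl | rfl)
        · exact Submodule.subset_span (by simp)
        · exact Submodule.subset_span (by simp)
        · exact hω
    · rw [← hS']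
      have : π = πt - algebraMap (Polynomial Fq) K (C (3⁻¹ : Fq) * a₁) := by rw [hπt']; ring
      rw [this]
      exact S.sub_mem (hsub (by simp)) (S.algebraMap_mem _)
  · intro a ha0 hent _
    obtain ⟨p, hp⟩ := hent 0 2
    rw [matrix_eq (toRat_ne_zero_s6 ha0)] at hp
    have hp' : toRat I * (toRat a)⁻¹ = toRat p := by simpa [hM02] using hp
    refine ⟨p, RatFunc.algebraMap_injective Fq ?_⟩
    change toRat I = toRat (a * p)
    rw [mul_inv_eq_iff_eq_mul₀ (toRat_ne_zero_s6 ha0)] at hp'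
    rw [hp', mul_comm a p]
    exact (map_mul _ p a).symm
end
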